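/- Let C be a salient closed convex cone in a finite-dimensional real normed vector space V and let α be a continuous antinorm associated with C whose dual function α^∨ is an antinorm associated with C^∨. Let p ∈ ri(C^∨). Then the function u ↦ ⟨p, u⟩ + α(u) attains a maximum on C \ {0} if and only if α^∨(p) = 1; in that case the maximal value is 0 and the set of maximizers equals p^∨ \ {0}, which is contained in ri C. -/

import Mathlib

open Set

variable {V : Type*} [NormedAddCommGroup V] [NormedSpace ℝ V]

/-- `C` is a closed convex cone (containing the origin). -/
def IsClosedConvexCone (C : Set V) : Prop :=
  (0 : V) ∈ C ∧ IsClosed C ∧ Convex ℝ C ∧ ∀ c : ℝ, 0 < c → ∀ x ∈ C, c • x ∈ C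

/-- A cone is salient if it contains no nonzero linear subspace,
equivalently it contains no pair `x, -x` with `x ≠ 0`. -/
def IsSalientCone (C : Set V) : Prop := ∀ x ∈ C, x ≠ 0 → -x ∉ C

/-- The relative boundary of a set: the set minus its relative (intrinsic) interior. -/
def relBoundary (C : Set V) : Set V := C \ intrinsicInterior ℝ C

/-- `a` is an antinorm associated with the cone `C` : it takes values in `ℝ ∪ {-∞}`,
is positive on the relative interior of `C`, vanishes on the relative boundary of `C`,
is `-∞` off `C`, is positively homogeneous and superadditive (concave). -/
def IsAntinorm (C : Set V) (a : V → EReal) : Prop :=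
  (∀ v, a v ≠ ⊤) ∧
  (∀ v ∈ intrinsicInterior ℝ C, 0 < a v) ∧
  (∀ v ∈ relBoundary C, a v = 0) ∧
  (∀ v, v ∉ C → a v = ⊥) ∧
  (∀ c : ℝ, 0 < c → ∀ v, a (c • v) = (c : EReal) * a v) ∧
  (∀ v w, a v + a w ≤ a (v + w))

/-- The negative dual cone `C^∨ = {p : ⟨p,u⟩ ≤ 0 ∀ u ∈ C}`. -/
def negDual (C : Set V) : Set (V →L[ℝ] ℝ) := {p | ∀ u ∈ C, p u ≤ 0}

/-- The antisphere of radius `r`. -/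
def antisphere (a : V → EReal) (r : ℝ) : Set V := {v | a v = (r : EReal)}

/-- The dual function `α^∨(p) = -sup_{v ∈ S₁} ⟨p, v⟩`. -/
noncomputable def dualFn (a : V → EReal) (p : V →L[ℝ] ℝ) : EReal :=
  - sSup ((fun v => ((p v : ℝ) : EReal)) '' antisphere a 1)

/-- `p^∨_r` : the set of maximizers of `v ↦ ⟨p, v⟩` over the antisphere `S_r`. -/
def maxSet (a : V → EReal) (p : V →L[ℝ] ℝ) (r : ℝ) : Set V :=
  {v ∈ antisphere a r | ∀ w ∈ antisphere a r, p w ≤ p v}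

/-- `p^∨ = ⋃_{r ≥ 0} p^∨_r`. -/
def pDual (a : V → EReal) (p : V →L[ℝ] ℝ) : Set V := ⋃ r ∈ Ici (0 : ℝ), maxSet a p r

/-!
For salient `C`, a functional `p` in the relative interior of `C^∨` is negative on `C \ {0}`:
if `p u = 0` for some nonzero `u ∈ C`, moving from `p` slightly away from an element of `C^∨`
that is negative at `u` would leave `C^∨`.

The function `p + α` is positively homogeneous, so a maximum on `C \ {0}` can only have the
value `0`. Normalizing by `α`, the inequality `p + α ≤ 0` on `C \ {0}` says `p ≤ -1` on the
antisphere `S₁`, and zeros of `p + α` correspond to points of `S₁` where `p = -1`. Hence the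
maximum exists if and only if `-1` is the greatest value of `p` on `S₁`. Finally, the supremum of
`p` over a nonempty `S₁` is always attained: its maximizers are the rescaled maximizers of `α` over
`C ∩ {p = -1}`, which is compact because `p` is negative on `C \ {0}`.
-/

section IntrinsicInterior

open Topology

variable {E : Type*} [AddCommGroup E] [Module ℝ E] [TopologicalSpace E]
  [IsTopologicalAddGroup E] [ContinuousSMul ℝ E]

lemma exists_neg_lineMap_mem_of_mem_intrinsicInterior {s : Set E} {x y : E}
    (hx : x ∈ intrinsicInterior ℝ s) (hy : y ∈ affineSpan ℝ s) :
    ∃ t < (0 : ℝ), AffineMap.lineMap x y t ∈ s := by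
  obtain ⟨x', hx', rfl⟩ := mem_intrinsicInterior.1 hx
  let line : ℝ → affineSpan ℝ s := fun t =>
    ⟨AffineMap.lineMap (x' : E) y t, AffineMap.lineMap_mem t x'.2 hy⟩
  have line_cont : Continuous line := by
    apply Continuous.subtype_mk
    exact AffineMap.lineMap_continuous
  have line_zero : line 0 = x' := Subtype.ext (AffineMap.lineMap_apply_zero _ _)
  have mem_near_zero : ∀ᶠ t in 𝓝 (0 : ℝ), line t ∈ ((↑) ⁻¹' s : Set (affineSpan ℝ s)) :=
    line_cont.continuousAt.eventually_mem (line_zero ▸ mem_interior_iff_mem_nhds.1 hx')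
  obtain ⟨t, ht_mem, ht_neg⟩ :=
    ((mem_near_zero.filter_mono nhdsWithin_le_nhds).and
      (self_mem_nhdsWithin : Iio 0 ∈ 𝓝[<] (0 : ℝ))).exists
  exact ⟨t, ht_neg, ht_mem⟩

end IntrinsicInterior

section DualCone

variable {C : Set V} {p : V →L[ℝ] ℝ} {x : V}

lemma exists_mem_negDual_pos_of_notMem (hC : IsClosedConvexCone C) (hx : x ∉ C) :
    ∃ f ∈ negDual C, 0 < f x := by
  obtain ⟨zero_mem, closed, convex, smul_mem⟩ := hC
  obtain ⟨f, c, hfC, hfx⟩ := geometric_hahn_banach_closed_point convex closed hx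
  have c_pos : 0 < c := by simpa only [map_zero] using hfC 0 zero_mem
  refine ⟨f, fun w hw => ?_, c_pos.trans hfx⟩
  by_contra! hfw
  have := hfC _ (smul_mem (c / f w) (div_pos c_pos hfw) w hw)
  rw [map_smul, smul_eq_mul, div_mul_cancel₀ _ hfw.ne'] at this
  exact this.false

lemma neg_of_mem_intrinsicInterior_negDual (hC : IsClosedConvexCone C) (hsal : IsSalientCone C)
    (hp : p ∈ intrinsicInterior ℝ (negDual C)) (hx : x ∈ C) (hx0 : x ≠ 0) : p x < 0 := by
  obtain ⟨f, hf, hfx⟩ := exists_mem_negDual_pos_of_notMem hC (hsal x hx hx0)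
  rw [map_neg, neg_pos] at hfx
  obtain ⟨t, ht, hmem⟩ :=
    exists_neg_lineMap_mem_of_mem_intrinsicInterior hp (subset_affineSpan ℝ _ hf)
  have extended_nonpos : (1 - t) * p x + t * f x ≤ 0 := by
    simpa [AffineMap.lineMap_apply_module] using hmem x hx
  have := mul_pos_of_neg_of_neg ht hfx
  exact neg_of_mul_neg_right (by linarith : (1 - t) * p x < 0) (by linarith)

end DualCone

section CompactBase

variable {C : Set V} {p : V →L[ℝ] ℝ}

lemma exists_pos_mul_norm_le_neg_apply [FiniteDimensional ℝ V] (hC : IsClosed C)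
    (hsmul : ∀ c : ℝ, 0 < c → ∀ u ∈ C, c • u ∈ C) (hp : ∀ u ∈ C \ {0}, p u < 0) :
    ∃ m : ℝ, 0 < m ∧ ∀ u ∈ C, m * ‖u‖ ≤ -p u := by
  have sphere_compact : IsCompact (C ∩ Metric.sphere (0 : V) 1) :=
    (isCompact_sphere 0 1).inter_left hC
  have neg_p_pos : ∀ u ∈ C ∩ Metric.sphere (0 : V) 1, 0 < -p u := fun u hu =>
    neg_pos.2 (hp u ⟨hu.1, ne_zero_of_mem_unit_sphere ⟨u, hu.2⟩⟩)
  obtain ⟨m, hm, hle⟩ := sphere_compact.exists_forall_le'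
    p.continuous.neg.continuousOn neg_p_pos
  refine ⟨m, hm, fun u hu => ?_⟩
  rcases eq_or_ne u 0 with rfl | hu0
  · simp
  have norm_pos : 0 < ‖u‖ := norm_pos_iff.2 hu0
  have := hle (‖u‖⁻¹ • u) ⟨hsmul _ (inv_pos.2 norm_pos) u hu, by simp [norm_smul, hu0]⟩
  rwa [Pi.neg_apply, map_smul, smul_eq_mul, ← mul_neg, le_inv_mul_iff₀ norm_pos, mul_comm] at this

lemma isCompact_base [FiniteDimensional ℝ V] (hC : IsClosed C)
    (hsmul : ∀ c : ℝ, 0 < c → ∀ u ∈ C, c • u ∈ C) (hp : ∀ u ∈ C \ {0}, p u < 0) :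
    IsCompact {u ∈ C | p u = -1} := by
  obtain ⟨m, hm, hle⟩ := exists_pos_mul_norm_le_neg_apply hC hsmul hp
  refine Metric.isCompact_of_isClosed_isBounded
    (hC.inter (isClosed_eq p.continuous continuous_const)) ?_
  refine (Metric.isBounded_closedBall (x := (0 : V)) (r := 1 / m)).subset ?_
  rintro u ⟨hu, hpu⟩
  rw [mem_closedBall_zero_iff, le_div_iff₀' hm]
  simpa [hpu] using hle u hu

end CompactBase

lemma eq_zero_of_isMaxOn_of_homogeneous {E : Type*} [SMul ℝ E] {f : E → ℝ} {s : Set E} {u : E}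
    (hs : ∀ c : ℝ, 0 < c → ∀ x ∈ s, c • x ∈ s)
    (hf : ∀ c : ℝ, 0 < c → ∀ x ∈ s, f (c • x) = c * f x)
    (hu : u ∈ s) (hmax : IsMaxOn f s u) : f u = 0 := by
  have bound (c : ℝ) (hc : 0 < c) : c * f u ≤ f u :=
    hf c hc u hu ▸ isMaxOn_iff.1 hmax _ (hs c hc u hu)
  linarith [bound 2 (by norm_num), bound (1 / 2) (by norm_num)]

section DualFunction

variable {a : V → EReal} {p : V →L[ℝ] ℝ}

lemma dualFn_eq_of_isGreatest {m : ℝ} (h : IsGreatest (p '' antisphere a 1) m) :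
    dualFn a p = ((-m : ℝ) : EReal) := by
  have := EReal.coe_strictMono.monotone.map_isGreatest h
  rw [image_image] at this
  rw [dualFn, this.csSup_eq, EReal.coe_neg]

lemma antisphere_nonempty_of_dualFn_ne_top (h : dualFn a p ≠ ⊤) :
    (antisphere a 1).Nonempty := by
  contrapose! h
  rw [dualFn, h, image_empty, sSup_empty, EReal.neg_bot]

end DualFunction

/-- A nonnegative positively homogeneous function with effective domain `C`: this is what remains
of an antinorm when neither superadditivity nor the sign conditions separating the relative
interior from the relative boundary are imposed. That `C` is stable under positive scaling is not
a field, because it follows from the homogeneity. -/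
structure IsConicGauge (C : Set V) (a : V → EReal) : Prop where
  ne_top (u : V) : a u ≠ ⊤
  nonneg : ∀ u ∈ C, 0 ≤ a u
  eq_bot : ∀ u ∉ C, a u = ⊥
  apply_smul : ∀ c : ℝ, 0 < c → ∀ u, a (c • u) = (c : EReal) * a u

lemma IsAntinorm.isConicGauge {C : Set V} {a : V → EReal} (ha : IsAntinorm C a) :
    IsConicGauge C a where
  ne_top := ha.1
  nonneg u hu := by
    by_cases hri : u ∈ intrinsicInterior ℝ C
    · exact (ha.2.1 u hri).le
    · exact (ha.2.2.1 u ⟨hu, hri⟩).ge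
  eq_bot := ha.2.2.2.1
  apply_smul := ha.2.2.2.2.1

namespace IsConicGauge

variable {C : Set V} {a : V → EReal} {p : V →L[ℝ] ℝ} {u v : V} {c r : ℝ}

lemma smul_mem (ha : IsConicGauge C a) (hc : 0 < c) (hu : u ∈ C) : c • u ∈ C := by
  by_contra h
  have nonneg_smul : 0 ≤ a (c • u) := by
    rw [ha.apply_smul c hc]
    exact mul_nonneg (EReal.coe_nonneg.2 hc.le) (ha.nonneg u hu)
  simp [ha.eq_bot _ h] at nonneg_smul

lemma smul_mem_diff_zero (ha : IsConicGauge C a) (hc : 0 < c) (hu : u ∈ C \ {0}) :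
    c • u ∈ C \ {0} :=
  ⟨ha.smul_mem hc hu.1, smul_ne_zero hc.ne' hu.2⟩

lemma coe_toReal (ha : IsConicGauge C a) (hu : u ∈ C) : ((a u).toReal : EReal) = a u :=
  EReal.coe_toReal (ha.ne_top u) fun h => by simpa [h] using ha.nonneg u hu

lemma toReal_nonneg (ha : IsConicGauge C a) (hu : u ∈ C) : 0 ≤ (a u).toReal :=
  EReal.toReal_nonneg (ha.nonneg u hu)

lemma toReal_smul (ha : IsConicGauge C a) (hc : 0 < c) (u : V) :
    (a (c • u)).toReal = c * (a u).toReal := by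
  rw [ha.apply_smul c hc, EReal.toReal_mul, EReal.toReal_coe]

lemma toReal_zero (ha : IsConicGauge C a) : (a 0).toReal = 0 := by
  have := ha.toReal_smul two_pos 0
  rw [smul_zero] at this
  linarith

lemma coe_apply_add (ha : IsConicGauge C a) (p : V →L[ℝ] ℝ) (hu : u ∈ C) :
    (p u : EReal) + a u = ((p u + (a u).toReal : ℝ) : EReal) := by
  rw [EReal.coe_add, ha.coe_toReal hu]

lemma mem_antisphere_iff (ha : IsConicGauge C a) :
    v ∈ antisphere a r ↔ v ∈ C ∧ (a v).toReal = r := by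
  refine ⟨fun hv => ?_, fun ⟨hv, hr⟩ => hr ▸ (ha.coe_toReal hv).symm⟩
  have hav : a v = r := hv
  refine ⟨by_contra fun hvC => ?_, by rw [hav, EReal.toReal_coe]⟩
  exact EReal.bot_ne_coe r (ha.eq_bot v hvC ▸ hav)

lemma smul_mem_antisphere (ha : IsConicGauge C a) (hc : 0 < c) (hv : v ∈ antisphere a r) :
    c • v ∈ antisphere a (c * r) := by
  obtain ⟨hvC, rfl⟩ := ha.mem_antisphere_iff.1 hv
  exact ha.mem_antisphere_iff.2 ⟨ha.smul_mem hc hvC, ha.toReal_smul hc v⟩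

lemma inv_smul_mem_antisphere_one (ha : IsConicGauge C a) (hu : u ∈ C)
    (hpos : 0 < (a u).toReal) : (a u).toReal⁻¹ • u ∈ antisphere a 1 :=
  inv_mul_cancel₀ hpos.ne' ▸
    ha.smul_mem_antisphere (inv_pos.2 hpos) (ha.mem_antisphere_iff.2 ⟨hu, rfl⟩)

lemma mem_diff_zero_of_mem_antisphere_one (ha : IsConicGauge C a) (hv : v ∈ antisphere a 1) :
    v ∈ C \ {0} := by
  obtain ⟨hvC, hav⟩ := ha.mem_antisphere_iff.1 hv
  refine ⟨hvC, ?_⟩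
  rintro rfl
  exact zero_ne_one (ha.toReal_zero.symm.trans hav)

lemma exists_isGreatest_image_antisphere [FiniteDimensional ℝ V] (ha : IsConicGauge C a)
    (hC : IsClosed C) (hcont : UpperSemicontinuousOn a C) (hp : ∀ u ∈ C \ {0}, p u < 0)
    (hne : (antisphere a 1).Nonempty) : ∃ m, IsGreatest (p '' antisphere a 1) m := by
  have neg_pos_of_mem {w : V} (hw : w ∈ antisphere a 1) : 0 < -p w :=
    neg_pos.2 (hp w (ha.mem_diff_zero_of_mem_antisphere_one hw))
  have normalized_mem {w : V} (hw : w ∈ antisphere a 1) :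
      (-p w)⁻¹ • w ∈ {u ∈ C | p u = -1} ∧ (a ((-p w)⁻¹ • w)).toReal = (-p w)⁻¹ := by
    obtain ⟨hwC, haw⟩ := ha.mem_antisphere_iff.1 hw
    have scale_pos := inv_pos.2 (neg_pos_of_mem hw)
    refine ⟨⟨ha.smul_mem scale_pos hwC, ?_⟩, ?_⟩
    · rw [map_smul, smul_eq_mul, ← neg_inj, ← mul_neg, inv_mul_cancel₀ (neg_pos_of_mem hw).ne',
        neg_neg]
    · rw [ha.toReal_smul scale_pos, haw, mul_one]
  obtain ⟨u, ⟨huC, hpu⟩, hmax⟩ := UpperSemicontinuousOn.exists_isMaxOn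
    (hne.elim fun w hw => ⟨_, (normalized_mem hw).1⟩)
    (isCompact_base hC (fun _ hc _ hu => ha.smul_mem hc hu) hp)
    (hcont.mono (sep_subset _ _))
  have inv_le {w : V} (hw : w ∈ antisphere a 1) : (-p w)⁻¹ ≤ (a u).toReal := by
    obtain ⟨hbase, hval⟩ := normalized_mem hw
    rw [← hval, ← EReal.coe_le_coe_iff, ha.coe_toReal huC, ha.coe_toReal hbase.1]
    exact hmax hbase
  have hpos : 0 < (a u).toReal :=
    hne.elim fun w hw => (inv_pos.2 (neg_pos_of_mem hw)).trans_le (inv_le hw)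
  refine ⟨-(a u).toReal⁻¹, ⟨_, ha.inv_smul_mem_antisphere_one huC hpos, by simp [hpu]⟩, ?_⟩
  rintro _ ⟨w, hw, rfl⟩
  exact le_neg_of_le_neg (inv_le_of_inv_le₀ (neg_pos_of_mem hw) (inv_le hw))

lemma dualFn_eq_one_iff [FiniteDimensional ℝ V] (ha : IsConicGauge C a)
    (hC : IsClosed C) (hcont : UpperSemicontinuousOn a C) (hp : ∀ u ∈ C \ {0}, p u < 0) :
    dualFn a p = 1 ↔ IsGreatest (p '' antisphere a 1) (-1) := by
  refine ⟨fun h => ?_, fun h => by rw [dualFn_eq_of_isGreatest h, neg_neg, EReal.coe_one]⟩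
  have hne : (antisphere a 1).Nonempty :=
    antisphere_nonempty_of_dualFn_ne_top (p := p) (h ▸ EReal.coe_ne_top 1)
  obtain ⟨m, hm⟩ := ha.exists_isGreatest_image_antisphere hC hcont hp hne
  rw [dualFn_eq_of_isGreatest hm] at h
  rwa [← neg_eq_iff_eq_neg.1 (EReal.coe_eq_one.1 h)]

lemma apply_add_toReal_nonpos_iff (ha : IsConicGauge C a) (hp : ∀ u ∈ C \ {0}, p u < 0) :
    (∀ w ∈ C \ {0}, p w + (a w).toReal ≤ 0) ↔ -1 ∈ upperBounds (p '' antisphere a 1) := by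
  rw [mem_upperBounds, forall_mem_image]
  constructor
  · intro h v hv
    have := h v (ha.mem_diff_zero_of_mem_antisphere_one hv)
    rw [(ha.mem_antisphere_iff.1 hv).2] at this
    linarith
  · intro h w hw
    rcases (ha.toReal_nonneg hw.1).eq_or_lt with hzero | hpos
    · linarith [hp w hw]
    · have := h (ha.inv_smul_mem_antisphere_one hw.1 hpos)
      rw [map_smul, smul_eq_mul, inv_mul_le_iff₀ hpos] at this
      linarith

lemma isGreatest_image_antisphere_iff (ha : IsConicGauge C a) (hp : ∀ u ∈ C \ {0}, p u < 0) :
    IsGreatest (p '' antisphere a 1) (-1) ↔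
      (∃ u ∈ C \ {0}, p u + (a u).toReal = 0) ∧ ∀ w ∈ C \ {0}, p w + (a w).toReal ≤ 0 := by
  rw [IsGreatest, ha.apply_add_toReal_nonpos_iff hp]
  refine and_congr_left fun _ => ⟨?_, ?_⟩
  · rintro ⟨v, hv, hpv⟩
    refine ⟨v, ha.mem_diff_zero_of_mem_antisphere_one hv, ?_⟩
    rw [hpv, (ha.mem_antisphere_iff.1 hv).2, neg_add_cancel]
  · rintro ⟨u, hu, hzero⟩
    have hpos : 0 < (a u).toReal := by linarith [hp u hu]
    refine ⟨_, ha.inv_smul_mem_antisphere_one hu.1 hpos, ?_⟩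
    rw [map_smul, smul_eq_mul, eq_neg_of_add_eq_zero_left hzero, mul_neg,
      inv_mul_cancel₀ hpos.ne']

lemma forall_apply_add_le_iff (ha : IsConicGauge C a) (hu : u ∈ C \ {0}) :
    (∀ w ∈ C \ {0}, (p w : EReal) + a w ≤ (p u : EReal) + a u) ↔
      p u + (a u).toReal = 0 ∧ ∀ w ∈ C \ {0}, p w + (a w).toReal ≤ 0 := by
  have real_form : (∀ w ∈ C \ {0}, (p w : EReal) + a w ≤ (p u : EReal) + a u) ↔
      IsMaxOn (fun w => p w + (a w).toReal) (C \ {0}) u :=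
    forall₂_congr fun w hw => by
      rw [ha.coe_apply_add p hw.1, ha.coe_apply_add p hu.1, EReal.coe_le_coe_iff, mem_ofPred_eq]
  rw [real_form]
  refine ⟨fun hmax => ?_, fun ⟨hzero, hle⟩ w hw => (hle w hw).trans hzero.ge⟩
  have hzero : p u + (a u).toReal = 0 :=
    eq_zero_of_isMaxOn_of_homogeneous (f := fun w => p w + (a w).toReal)
      (fun _ hc _ hx => ha.smul_mem_diff_zero hc hx)
      (fun c hc x _ => by rw [map_smul, ha.toReal_smul hc, smul_eq_mul, mul_add]) hu hmax
  exact ⟨hzero, fun w hw => (hmax hw).trans hzero.le⟩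

lemma mem_pDual_diff_zero_iff (ha : IsConicGauge C a) (hp : ∀ u ∈ C \ {0}, p u < 0)
    (hmax : IsGreatest (p '' antisphere a 1) (-1)) :
    u ∈ pDual a p \ {0} ↔ u ∈ C \ {0} ∧ p u + (a u).toReal = 0 := by
  obtain ⟨⟨v, hv, hpv⟩, hub⟩ := hmax
  have hle := (ha.apply_add_toReal_nonpos_iff hp).2 hub
  simp only [pDual, mem_sdiff, mem_iUnion, mem_Ici]
  constructor
  · rintro ⟨⟨r, -, hur, hu_max⟩, hu0⟩
    obtain ⟨huC, rfl⟩ := ha.mem_antisphere_iff.1 hur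
    refine ⟨⟨huC, hu0⟩, ?_⟩
    have hpu := hp u ⟨huC, hu0⟩
    rcases (ha.toReal_nonneg huC).eq_or_lt with hzero | hpos
    · -- On the antisphere of radius `0`, shrinking `u` increases `p`: there is no maximizer.
      have := hu_max _ (by simpa [← hzero] using ha.smul_mem_antisphere one_half_pos hur)
      rw [map_smul, smul_eq_mul] at this
      linarith
    · have := hu_max _ (by simpa using ha.smul_mem_antisphere hpos hv)
      rw [map_smul, smul_eq_mul, hpv] at this
      linarith [hle u ⟨huC, hu0⟩]
  · rintro ⟨hu, hzero⟩
    refine ⟨⟨_, ha.toReal_nonneg hu.1, ha.mem_antisphere_iff.2 ⟨hu.1, rfl⟩, fun w hw => ?_⟩, hu.2⟩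
    obtain ⟨hwC, haw⟩ := ha.mem_antisphere_iff.1 hw
    rcases eq_or_ne w 0 with rfl | hw0
    · linarith [ha.toReal_zero, map_zero p]
    · linarith [hle w ⟨hwC, hw0⟩]

end IsConicGauge

theorem statement9_general [FiniteDimensional ℝ V] {C : Set V} {a : V → EReal} {p : V →L[ℝ] ℝ}
    (ha : IsConicGauge C a) (hbd : ∀ u ∈ relBoundary C, a u = 0) (hC : IsClosed C)
    (hcont : UpperSemicontinuousOn a C) (hp : ∀ u ∈ C \ {0}, p u < 0) :
    ((∃ u ∈ C \ {0}, ∀ w ∈ C \ {0},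
        ((p w : ℝ) : EReal) + a w ≤ ((p u : ℝ) : EReal) + a u) ↔ dualFn a p = 1) ∧
    (dualFn a p = 1 →
      (∀ u ∈ C \ {0}, ((p u : ℝ) : EReal) + a u ≤ 0) ∧
      (∀ u ∈ pDual a p \ {0}, ((p u : ℝ) : EReal) + a u = 0) ∧
      {u ∈ C \ {0} | ∀ w ∈ C \ {0},
        ((p w : ℝ) : EReal) + a w ≤ ((p u : ℝ) : EReal) + a u} = pDual a p \ {0} ∧
      pDual a p \ {0} ⊆ intrinsicInterior ℝ C) := by
  rw [ha.dualFn_eq_one_iff hC hcont hp]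
  refine ⟨?_, fun hmax => ?_⟩
  · rw [ha.isGreatest_image_antisphere_iff hp]
    exact ⟨fun ⟨u, hu, h⟩ => ((ha.forall_apply_add_le_iff hu).1 h).imp_left fun h0 => ⟨u, hu, h0⟩,
      fun ⟨⟨u, hu, h0⟩, hle⟩ => ⟨u, hu, (ha.forall_apply_add_le_iff hu).2 ⟨h0, hle⟩⟩⟩
  have hle := ((ha.isGreatest_image_antisphere_iff hp).1 hmax).2
  have mem_iff {u : V} := ha.mem_pDual_diff_zero_iff (u := u) hp hmax
  refine ⟨fun u hu => ?_, fun u hu => ?_, ?_, fun u hu => ?_⟩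
  · rw [ha.coe_apply_add p hu.1]
    exact EReal.coe_nonpos.2 (hle u hu)
  · obtain ⟨huC, hzero⟩ := mem_iff.1 hu
    rw [ha.coe_apply_add p huC.1, hzero, EReal.coe_zero]
  · ext u
    rw [mem_iff]
    exact and_congr_right fun hu => (ha.forall_apply_add_le_iff hu).trans (and_iff_left hle)
  · obtain ⟨huC, hzero⟩ := mem_iff.1 hu
    by_contra hri
    have := hp u huC
    rw [hbd u ⟨huC.1, hri⟩, EReal.toReal_zero] at hzero
    linarith

/-- Let `C` be a salient closed convex cone, `a` a continuous antinorm whose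
dual function is an antinorm associated with `C^∨`, and `p ∈ ri(C^∨)`. Then
`u ↦ ⟨p, u⟩ + a(u)` attains a maximum on `C \ {0}` iff `a^∨(p) = 1`; in that case the
maximal value is `0` and the set of maximizers is `p^∨ \ {0} ⊆ ri C`. -/
theorem statement9 {V : Type*} [NormedAddCommGroup V] [NormedSpace ℝ V] [FiniteDimensional ℝ V]
    (C : Set V) (hC : IsClosedConvexCone C) (hsal : IsSalientCone C)
    (a : V → EReal) (ha : IsAntinorm C a) (hcont : ContinuousOn a C)
    (hdual : IsAntinorm (negDual C) (dualFn a))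
    (p : V →L[ℝ] ℝ) (hp : p ∈ intrinsicInterior ℝ (negDual C)) :
    ((∃ u ∈ C \ {0}, ∀ w ∈ C \ {0},
        ((p w : ℝ) : EReal) + a w ≤ ((p u : ℝ) : EReal) + a u) ↔ dualFn a p = 1) ∧
    (dualFn a p = 1 →
      (∀ u ∈ C \ {0}, ((p u : ℝ) : EReal) + a u ≤ 0) ∧
      (∀ u ∈ pDual a p \ {0}, ((p u : ℝ) : EReal) + a u = 0) ∧
      {u ∈ C \ {0} | ∀ w ∈ C \ {0},
        ((p w : ℝ) : EReal) + a w ≤ ((p u : ℝ) : EReal) + a u} = pDual a p \ {0} ∧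
      pDual a p \ {0} ⊆ intrinsicInterior ℝ C) :=
  statement9_general ha.isConicGauge ha.2.2.1 hC.2.1 hcont.upperSemicontinuousOn
    fun _ hu => neg_of_mem_intrinsicInterior_negDual hC hsal hp hu.1 hu.2
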